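/- Suppose R and Q are abstract n-polytopes and η̄ : Mon(R) → Mon(Q) is an epimorphism of sggi's, i.e. a group epimorphism mapping the j-th monodromy generator of R to the j-th monodromy generator of Q for each j. Suppose also that there are flags Λ' of R and Λ of Q such that the image under η̄ of the stabilizer of Λ' in Mon(R) is contained in the stabilizer of Λ in Mon(Q). Then there is a unique covering η : R → Q which maps Λ' to Λ. -/

import Mathlib

/-- Two flags are `j`-adjacent (w.r.t. the rank function `rk`): they are distinct
and agree in every face whose rank is different from `j`. -/
def IsPolytopeAdj {P : Type*} [PartialOrder P] (rk : P → ℤ) (j : ℤ) (c d : Flag P) : Prop :=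
  c ≠ d ∧ ∀ z : P, rk z ≠ j → (z ∈ c ↔ z ∈ d)

/-- `P`, with strictly monotone rank function `rk` onto `{-1, 0, ..., n}`, is an
abstract polytope of rank `n`: it has a least and a greatest face, satisfies the
diamond condition and is strongly flag-connected. -/
structure IsAbstractPolytope {P : Type*} [PartialOrder P] (n : ℤ) (rk : P → ℤ) : Prop where
  neg_one_le : -1 ≤ n
  strictMono : ∀ {F G : P}, F < G → rk F < rk G
  rank_range : Set.range rk = Set.Icc (-1 : ℤ) n
  exists_bot : ∃ F₀ : P, ∀ F, F₀ ≤ F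
  exists_top : ∃ Fn : P, ∀ F, F ≤ Fn
  diamond : ∀ F G : P, F < G → rk G = rk F + 2 →
    ∃ H₁ H₂ : P, H₁ ≠ H₂ ∧ ∀ H : P, (F < H ∧ H < G) ↔ (H = H₁ ∨ H = H₂)
  strongly_connected : ∀ F G : P, F ≤ G →
    ∀ c d : Flag ↥(Set.Icc F G),
      Relation.ReflTransGen
        (fun c' d' => ∃ j : ℤ, IsPolytopeAdj (fun H => rk H.val) j c' d') c d

/-- A covering of polytopes: an order- and rank-preserving map sending flags to
flags and sending `j`-adjacent pairs of flags to `j`-adjacent pairs of flags. -/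
def IsPolytopeCovering {R Q : Type*} [PartialOrder R] [PartialOrder Q]
    (rkR : R → ℤ) (rkQ : Q → ℤ) (η : R → Q) : Prop :=
  Monotone η ∧ (∀ F : R, rkQ (η F) = rkR F) ∧
  (∀ c : Flag R, ∃ c' : Flag Q, η '' ↑c = ↑c') ∧
  (∀ (j : ℤ) (c d : Flag R) (c' d' : Flag Q), η '' ↑c = ↑c' → η '' ↑d = ↑d' →
    IsPolytopeAdj rkR j c d → IsPolytopeAdj rkQ j c' d')

/-- A polytope is regular if its automorphism group (order-preserving bijections)
acts transitively on the set of flags. -/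
def IsRegularPolytope {P : Type*} [PartialOrder P] : Prop :=
  ∀ c d : Flag P, ∃ e : P ≃o P, e '' (↑c : Set P) = (↑d : Set P)

/-- An abstract polytope of rank `n`, bundled with its carrier. -/
structure BundledPolytope (n : ℤ) where
  carrier : Type
  [po : PartialOrder carrier]
  rk : carrier → ℤ
  isPolytope : IsAbstractPolytope n rk

attribute [instance] BundledPolytope.po

namespace Flag

/-- A set that consists of exactly the elements comparable to all of its members is a flag. -/
def ofMemIff {α : Type*} [Preorder α] (s : Set α)
    (h : ∀ a, a ∈ s ↔ ∀ b ∈ s, a ≤ b ∨ b ≤ a) : Flag α where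
  carrier := s
  Chain' := fun a ha b hb _ => (h a).1 ha b hb
  max_chain' := fun _ ht hst =>
    hst.antisymm fun a ha => (h a).2 fun _ hb => ht.total ha (hst hb)

variable {P : Type*} [PartialOrder P] {F G : P}

theorem mem_of_forall_le (c : Flag P) (hF : ∀ x, F ≤ x) : F ∈ c :=
  mem_iff_forall_le_or_ge.2 fun x _ => Or.inl (hF x)

theorem mem_of_forall_ge (c : Flag P) (hF : ∀ x, x ≤ F) : F ∈ c :=
  mem_iff_forall_le_or_ge.2 fun x _ => Or.inr (hF x)

theorem left_mem_of_Icc (hFG : F ≤ G) (a : Flag (Set.Icc F G)) :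
    (⟨F, Set.left_mem_Icc.2 hFG⟩ : Set.Icc F G) ∈ a :=
  a.mem_of_forall_le fun b => b.2.1

theorem right_mem_of_Icc (hFG : F ≤ G) (a : Flag (Set.Icc F G)) :
    (⟨G, Set.right_mem_Icc.2 hFG⟩ : Set.Icc F G) ∈ a :=
  a.mem_of_forall_ge fun b => b.2.2

/-- The part of a flag inside a section whose end points belong to the flag. -/
def restrictIcc (c : Flag P) (hF : F ∈ c) (hG : G ∈ c) : Flag (Set.Icc F G) :=
  ofMemIff {x | (x : P) ∈ c} fun x => by
    constructor
    · intro hx y hy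
      exact c.le_or_le hx hy
    · intro h
      refine mem_iff_forall_le_or_ge.2 fun y hy => ?_
      rcases c.le_or_le hF hy with h1 | h1
      · rcases c.le_or_le hG hy with h2 | h2
        · exact Or.inl (x.2.2.trans h2)
        · exact h ⟨y, h1, h2⟩ hy
      · exact Or.inr (h1.trans x.2.1)

/-- The flag obtained from `c` by replacing its part inside the section `G / F` by `a`. -/
def replaceIcc (c : Flag P) (hFG : F ≤ G) (hF : F ∈ c) (hG : G ∈ c)
    (a : Flag (Set.Icc F G)) : Flag P :=
  ofMemIff {x | (∃ h : x ∈ Set.Icc F G, (⟨x, h⟩ : Set.Icc F G) ∈ a) ∨ (x ∈ c ∧ (x ≤ F ∨ G ≤ x))}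
    fun x => by
    constructor
    · rintro (⟨hx, hxa⟩ | ⟨hx, hx'⟩) y (⟨hy, hya⟩ | ⟨hy, hy'⟩)
      · exact a.le_or_le hxa hya
      · rcases hy' with h | h
        · exact Or.inr (h.trans hx.1)
        · exact Or.inl (hx.2.trans h)
      · rcases hx' with h | h
        · exact Or.inl (h.trans hy.1)
        · exact Or.inr (hy.2.trans h)
      · exact c.le_or_le hx hy
    · intro h
      have hsplit : ∀ y ∈ c, y ∈ Set.Icc F G ∨ y ≤ F ∨ G ≤ y := fun y hy => by
        rcases c.le_or_le hF hy with h1 | h1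
        · rcases c.le_or_le hG hy with h2 | h2
          · exact Or.inr (Or.inr h2)
          · exact Or.inl ⟨h1, h2⟩
        · exact Or.inr (Or.inl h1)
      rcases h F (Or.inl ⟨_, left_mem_of_Icc hFG a⟩) with h1 | h1
      · refine Or.inr ⟨mem_iff_forall_le_or_ge.2 fun y hy => ?_, Or.inl h1⟩
        rcases hsplit y hy with h2 | h2
        · exact Or.inl (h1.trans h2.1)
        · exact h y (Or.inr ⟨hy, h2⟩)
      rcases h G (Or.inl ⟨_, right_mem_of_Icc hFG a⟩) with h2 | h2
      · exact Or.inl ⟨⟨h1, h2⟩, mem_iff_forall_le_or_ge.2 fun y hy => h y (Or.inl ⟨y.2, hy⟩)⟩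
      · refine Or.inr ⟨mem_iff_forall_le_or_ge.2 fun y hy => ?_, Or.inr h2⟩
        rcases hsplit y hy with h3 | h3
        · exact Or.inr (h3.2.trans h2)
        · exact h y (Or.inr ⟨hy, h3⟩)

theorem mem_replaceIcc (c : Flag P) (hFG : F ≤ G) (hF : F ∈ c) (hG : G ∈ c)
    (a : Flag (Set.Icc F G)) (x : P) :
    x ∈ c.replaceIcc hFG hF hG a ↔
      (∃ h : x ∈ Set.Icc F G, (⟨x, h⟩ : Set.Icc F G) ∈ a) ∨ (x ∈ c ∧ (x ≤ F ∨ G ≤ x)) :=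
  Iff.rfl

theorem left_mem_replaceIcc (c : Flag P) (hFG : F ≤ G) (hF : F ∈ c) (hG : G ∈ c)
    (a : Flag (Set.Icc F G)) : F ∈ c.replaceIcc hFG hF hG a :=
  Or.inl ⟨_, left_mem_of_Icc hFG a⟩

theorem right_mem_replaceIcc (c : Flag P) (hFG : F ≤ G) (hF : F ∈ c) (hG : G ∈ c)
    (a : Flag (Set.Icc F G)) : G ∈ c.replaceIcc hFG hF hG a :=
  Or.inl ⟨_, right_mem_of_Icc hFG a⟩

theorem coe_mem_replaceIcc (c : Flag P) (hFG : F ≤ G) (hF : F ∈ c) (hG : G ∈ c)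
    (a : Flag (Set.Icc F G)) (x : Set.Icc F G) :
    (x : P) ∈ c.replaceIcc hFG hF hG a ↔ x ∈ a := by
  rw [mem_replaceIcc]
  refine ⟨?_, fun h => Or.inl ⟨x.2, h⟩⟩
  rintro (⟨_, h⟩ | ⟨_, h | h⟩)
  · exact h
  · rw [Subtype.ext (le_antisymm h x.2.1) (a2 := ⟨F, Set.left_mem_Icc.2 hFG⟩)]
    exact left_mem_of_Icc hFG a
  · rw [Subtype.ext (le_antisymm x.2.2 h) (a2 := ⟨G, Set.right_mem_Icc.2 hFG⟩)]
    exact right_mem_of_Icc hFG a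

theorem replaceIcc_restrictIcc (c : Flag P) (hFG : F ≤ G) (hF : F ∈ c) (hG : G ∈ c) :
    c.replaceIcc hFG hF hG (c.restrictIcc hF hG) = c := by
  refine SetLike.ext fun x => ?_
  rw [mem_replaceIcc]
  constructor
  · rintro (⟨_, h⟩ | ⟨h, _⟩)
    exacts [h, h]
  · intro hx
    rcases c.le_or_le hF hx with h1 | h1
    · rcases c.le_or_le hG hx with h2 | h2
      · exact Or.inr ⟨hx, Or.inr h2⟩
      · exact Or.inl ⟨⟨h1, h2⟩, hx⟩
    · exact Or.inr ⟨hx, Or.inl h1⟩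

end Flag

namespace IsPolytopeAdj

variable {P : Type*} [PartialOrder P] {rk : P → ℤ} {j : ℤ}

theorem replaceIcc {F G : P} (c : Flag P) (hFG : F ≤ G) (hF : F ∈ c) (hG : G ∈ c)
    {a b : Flag (Set.Icc F G)} (h : IsPolytopeAdj (fun H : Set.Icc F G => rk H.val) j a b) :
    IsPolytopeAdj rk j (c.replaceIcc hFG hF hG a) (c.replaceIcc hFG hF hG b) := by
  refine ⟨fun he => h.1 (SetLike.ext fun x => ?_), fun z hz => ?_⟩
  · rw [← c.coe_mem_replaceIcc hFG hF hG a x, he, Flag.coe_mem_replaceIcc]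
  · rw [Flag.mem_replaceIcc, Flag.mem_replaceIcc]
    exact or_congr (exists_congr fun hz' => h.2 ⟨z, hz'⟩ hz) Iff.rfl

theorem exists_rank_eq {c d : Flag P} (h : IsPolytopeAdj rk j c d) : ∃ z ∈ d, rk z = j := by
  by_contra! hd
  exact h.1 (Flag.ext (d.max_chain' c.chain_le fun z hz => (h.2 z (hd z hz)).2 hz).symm)

theorem exists_mem_rank {c d : Flag P} (h : IsPolytopeAdj rk j c d) {r : ℤ}
    (hc : ∃ z ∈ c, rk z = r) : ∃ z ∈ d, rk z = r := by
  obtain ⟨z, hz, rfl⟩ := hc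
  by_cases hj : rk z = j
  · rw [hj]
    exact h.exists_rank_eq
  · exact ⟨z, (h.2 z hj).1 hz, rfl⟩

end IsPolytopeAdj

namespace IsAbstractPolytope

variable {P : Type*} [PartialOrder P] {n : ℤ} {rk : P → ℤ}

theorem le_of_mem (hP : IsAbstractPolytope n rk) {c : Flag P} {F G : P} (hF : F ∈ c)
    (hG : G ∈ c) (h : rk F ≤ rk G) : F ≤ G := by
  rcases c.le_or_le hF hG with h1 | h1
  · exact h1
  · rcases h1.eq_or_lt with h2 | h2
    · exact h2.ge
    · exact absurd (hP.strictMono h2) h.not_gt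

theorem eq_of_mem (hP : IsAbstractPolytope n rk) {c : Flag P} {F G : P} (hF : F ∈ c)
    (hG : G ∈ c) (h : rk F = rk G) : F = G :=
  (hP.le_of_mem hF hG h.le).antisymm (hP.le_of_mem hG hF h.ge)

theorem adj_rank_ne (hP : IsAbstractPolytope n rk) {j : ℤ} {c d : Flag P} {F : P}
    (h : IsPolytopeAdj rk j c d) (hc : F ∈ c) (hd : F ∈ d) : j ≠ rk F := by
  rintro rfl
  refine h.1 (SetLike.ext fun z => ?_)
  by_cases hz : rk z = rk F
  · constructor <;> intro hm
    · rwa [hP.eq_of_mem hm hc hz]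
    · rwa [hP.eq_of_mem hm hd hz]
  · exact h.2 z hz

/-- The part of a flag `c` inside a section `G / F` can be replaced by that of another flag `d`,
through adjacencies that fix a prescribed face `H` that is an end point of the section. -/
theorem path_replaceIcc (hP : IsAbstractPolytope n rk) {c d : Flag P} {F G H : P} (hFG : F ≤ G)
    (hF : F ∈ c) (hG : G ∈ c) (hF' : F ∈ d) (hG' : G ∈ d) (hH : H = F ∨ H = G) :
    Relation.ReflTransGen (fun c' d' => ∃ j, j ≠ rk H ∧ IsPolytopeAdj rk j c' d') c
      (c.replaceIcc hFG hF hG (d.restrictIcc hF' hG')) := by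
  have key := (hP.strongly_connected F G hFG (c.restrictIcc hF hG) (d.restrictIcc hF' hG')).lift
    (p := fun c' d' => ∃ j, j ≠ rk H ∧ IsPolytopeAdj rk j c' d')
    (c.replaceIcc hFG hF hG) (by
      rintro a b ⟨j, hj⟩
      have hadj := hj.replaceIcc (rk := rk) c hFG hF hG
      refine ⟨j, ?_, hadj⟩
      rcases hH with rfl | rfl
      · exact hP.adj_rank_ne hadj (c.left_mem_replaceIcc hFG hF hG a)
          (c.left_mem_replaceIcc hFG hF hG b)
      · exact hP.adj_rank_ne hadj (c.right_mem_replaceIcc hFG hF hG a)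
          (c.right_mem_replaceIcc hFG hF hG b))
  rwa [Function.onFun, c.replaceIcc_restrictIcc hFG hF hG] at key

/-- Two flags through a common face `H` are connected by adjacencies that fix `H`. -/
theorem path_of_mem (hP : IsAbstractPolytope n rk) {c d : Flag P} {H : P}
    (hc : H ∈ c) (hd : H ∈ d) :
    Relation.ReflTransGen (fun c' d' => ∃ j, j ≠ rk H ∧ IsPolytopeAdj rk j c' d') c d := by
  obtain ⟨B, hB⟩ := hP.exists_bot
  obtain ⟨T, hT⟩ := hP.exists_top
  have hBm : ∀ c : Flag P, B ∈ c := fun c => c.mem_of_forall_le hB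
  have hTm : ∀ c : Flag P, T ∈ c := fun c => c.mem_of_forall_ge hT
  have h1 := hP.path_replaceIcc (hB H) (hBm c) hc (hBm d) hd (Or.inr rfl)
  set e := c.replaceIcc (hB H) (hBm c) hc (d.restrictIcc (hBm d) hd)
  have hHe : H ∈ e := c.right_mem_replaceIcc _ _ _ _
  have h2 := hP.path_replaceIcc (hT H) hHe (hTm e) hd (hTm d) (Or.inl rfl)
  refine h1.trans ?_
  convert h2 using 1
  refine SetLike.ext fun x => ?_
  constructor
  · intro hx
    rcases d.le_or_le hd hx with h | h
    · exact Or.inl ⟨⟨h, hT x⟩, hx⟩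
    · exact Or.inr ⟨Or.inl ⟨⟨hB x, h⟩, hx⟩, Or.inl h⟩
  · rintro (⟨_, h⟩ | ⟨h, h' | h'⟩)
    · exact h
    · exact (c.coe_mem_replaceIcc _ _ _ _ (⟨x, hB x, h'⟩ : Set.Icc B H)).1 h
    · exact (hT x).antisymm h' ▸ hTm d

theorem path (hP : IsAbstractPolytope n rk) (c d : Flag P) :
    Relation.ReflTransGen (fun c' d' => ∃ j, IsPolytopeAdj rk j c' d') c d := by
  obtain ⟨B, hB⟩ := hP.exists_bot
  have hBm : ∀ c : Flag P, B ∈ c := fun c => c.mem_of_forall_le hB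
  exact Relation.ReflTransGen.mono (fun _ _ ⟨j, _, h⟩ => ⟨j, h⟩) _ _
    (hP.path_of_mem (hBm c) (hBm d))

theorem rank_mem (hP : IsAbstractPolytope n rk) (F : P) : rk F ∈ Set.Icc (-1) n :=
  hP.rank_range ▸ Set.mem_range_self F

theorem exists_mem_rank (hP : IsAbstractPolytope n rk) (c : Flag P) {r : ℤ}
    (hr : r ∈ Set.Icc (-1) n) : ∃ z ∈ c, rk z = r := by
  rw [← hP.rank_range] at hr
  obtain ⟨G, hG⟩ := hr
  obtain ⟨d, hd⟩ := Flag.exists_mem G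
  have := hP.path d c
  induction this with
  | refl => exact ⟨G, hd, hG⟩
  | tail _ h ih => exact h.elim fun _ h => h.exists_mem_rank ih

theorem adj_index_mem (hP : IsAbstractPolytope n rk) {j : ℤ} {c d : Flag P}
    (h : IsPolytopeAdj rk j c d) : 0 ≤ j ∧ j < n := by
  obtain ⟨z, hz, rfl⟩ := h.exists_rank_eq
  obtain ⟨B, hB⟩ := hP.exists_bot
  obtain ⟨T, hT⟩ := hP.exists_top
  have hBm : ∀ c : Flag P, B ∈ c := fun c => c.mem_of_forall_le hB
  have hTm : ∀ c : Flag P, T ∈ c := fun c => c.mem_of_forall_ge hT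
  have hb := hP.adj_rank_ne h (hBm c) (hBm d)
  have ht := hP.adj_rank_ne h (hTm c) (hTm d)
  have hb' : rk B < rk z := hP.strictMono ((hB z).lt_of_ne fun he => hb (he ▸ rfl))
  have ht' : rk z < rk T := hP.strictMono ((hT z).lt_of_ne fun he => ht (he ▸ rfl))
  have := (hP.rank_mem B).1
  have := (hP.rank_mem T).2
  omega

/-- The `j`-adjacent flag is unique. -/
theorem adj_unique (hP : IsAbstractPolytope n rk) {j : ℤ} {c d e : Flag P}
    (hd : IsPolytopeAdj rk j c d) (he : IsPolytopeAdj rk j c e) : d = e := by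
  obtain ⟨hj0, hjn⟩ := hP.adj_index_mem hd
  obtain ⟨F, hF, hFr⟩ := hP.exists_mem_rank c (r := j - 1) ⟨by omega, by omega⟩
  obtain ⟨G, hG, hGr⟩ := hP.exists_mem_rank c (r := j + 1) ⟨by omega, by omega⟩
  obtain ⟨x, hx, hxr⟩ := hP.exists_mem_rank c (r := j) ⟨by omega, by omega⟩
  obtain ⟨y, hy, hyr⟩ := hd.exists_rank_eq
  obtain ⟨z, hz, hzr⟩ := he.exists_rank_eq
  have lt_of {c : Flag P} {A B : P} (hA : A ∈ c) (hB : B ∈ c) (h : rk A < rk B) : A < B :=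
    (hP.le_of_mem hA hB h.le).lt_of_ne fun h' => h.ne (h' ▸ rfl)
  obtain ⟨H₁, H₂, -, hH⟩ := hP.diamond F G (lt_of hF hG (by omega)) (by omega)
  have hFd := (hd.2 F (by omega)).1 hF
  have hGd := (hd.2 G (by omega)).1 hG
  have hFe := (he.2 F (by omega)).1 hF
  have hGe := (he.2 G (by omega)).1 hG
  have hx' := (hH x).1 ⟨lt_of hF hx (by omega), lt_of hx hG (by omega)⟩
  have hy' := (hH y).1 ⟨lt_of hFd hy (by omega), lt_of hy hGd (by omega)⟩
  have hz' := (hH z).1 ⟨lt_of hFe hz (by omega), lt_of hz hGe (by omega)⟩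
  have hxy : x ≠ y := fun h => hP.adj_rank_ne hd hx (h ▸ hy) hxr.symm
  have hxz : x ≠ z := fun h => hP.adj_rank_ne he hx (h ▸ hz) hxr.symm
  have hyz : y = z := by grind
  subst hyz
  by_contra hne
  have hde : IsPolytopeAdj rk j d e := ⟨hne, fun w hw => (hd.2 w hw).symm.trans (he.2 w hw)⟩
  exact hP.adj_rank_ne hde hy hz hyr.symm

end IsAbstractPolytope

section Monodromy

variable {R Q : Type*} [PartialOrder R] [PartialOrder Q] {n : ℕ} {rkR : R → ℤ} {rkQ : Q → ℤ}

/-- The monodromy group acts transitively on flags. -/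
theorem exists_monodromy_apply_eq (hR : IsAbstractPolytope (n : ℤ) rkR)
    {gR : Fin n → Equiv.Perm (Flag R)}
    (hgR : ∀ (j : Fin n) (Φ : Flag R), IsPolytopeAdj rkR (j : ℤ) Φ (gR j Φ)) (c d : Flag R) :
    ∃ w : Subgroup.closure (Set.range gR), (w : Equiv.Perm (Flag R)) c = d := by
  have := hR.path c d
  induction this with
  | refl => exact ⟨1, rfl⟩
  | @tail d e _ h ih =>
    obtain ⟨w, rfl⟩ := ih
    obtain ⟨j, hj⟩ := h
    obtain ⟨hj0, hjn⟩ := hR.adj_index_mem hj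
    lift j to ℕ using hj0
    refine ⟨⟨gR ⟨j, by omega⟩, Subgroup.subset_closure (Set.mem_range_self _)⟩ * w, ?_⟩
    exact hR.adj_unique (hgR ⟨j, by omega⟩ _) hj

/-- An epimorphism of monodromy groups compatible with stabilizers induces an
adjacency-preserving map of flags. -/
theorem exists_flag_map (hR : IsAbstractPolytope (n : ℤ) rkR)
    {gR : Fin n → Equiv.Perm (Flag R)}
    (hgR : ∀ (j : Fin n) (Φ : Flag R), IsPolytopeAdj rkR (j : ℤ) Φ (gR j Φ))
    {gQ : Fin n → Equiv.Perm (Flag Q)}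
    (hgQ : ∀ (j : Fin n) (Φ : Flag Q), IsPolytopeAdj rkQ (j : ℤ) Φ (gQ j Φ))
    (ebar : Subgroup.closure (Set.range gR) →* Equiv.Perm (Flag Q))
    (hebargen : ∀ j : Fin n,
      ebar ⟨gR j, Subgroup.subset_closure (Set.mem_range_self j)⟩ = gQ j)
    (Λ' : Flag R) (Λ : Flag Q)
    (hstab : ∀ w : Subgroup.closure (Set.range gR),
      (w : Equiv.Perm (Flag R)) Λ' = Λ' → (ebar w) Λ = Λ) :
    ∃ f : Flag R → Flag Q, f Λ' = Λ ∧
      ∀ j c d, IsPolytopeAdj rkR j c d → IsPolytopeAdj rkQ j (f c) (f d) := by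
  choose w hw using exists_monodromy_apply_eq hR hgR Λ'
  have hf : ∀ v : Subgroup.closure (Set.range gR),
      ebar (w ((v : Equiv.Perm (Flag R)) Λ')) Λ = ebar v Λ := fun v => by
    have h := hstab (v⁻¹ * w ((v : Equiv.Perm (Flag R)) Λ')) (by
      simp [hw])
    rw [map_mul, map_inv, Equiv.Perm.mul_apply, Equiv.Perm.inv_eq_iff_eq] at h
    exact h
  refine ⟨fun c => ebar (w c) Λ, by simpa using hf 1, fun j c d h => ?_⟩
  obtain ⟨hj0, hjn⟩ := hR.adj_index_mem h
  lift j to ℕ using hj0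
  have hd : d = gR ⟨j, by omega⟩ c := hR.adj_unique h (hgR ⟨j, by omega⟩ c)
  have hfd := hf (⟨gR ⟨j, by omega⟩, Subgroup.subset_closure (Set.mem_range_self _)⟩ * w c)
  rw [map_mul, hebargen, Equiv.Perm.mul_apply, Subgroup.coe_mul, Equiv.Perm.mul_apply, hw,
    ← hd] at hfd
  simp only [hfd]
  exact hgQ _ _

/-- An adjacency-preserving map of flags is induced by a map of faces. -/
theorem exists_face_map (hR : IsAbstractPolytope (n : ℤ) rkR)
    (hQ : IsAbstractPolytope (n : ℤ) rkQ) {f : Flag R → Flag Q}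
    (hf : ∀ j c d, IsPolytopeAdj rkR j c d → IsPolytopeAdj rkQ j (f c) (f d)) :
    ∃ η : R → Q, (∀ F, rkQ (η F) = rkR F) ∧ ∀ c : Flag R, ∀ F ∈ c, η F ∈ f c := by
  choose φ hφ using fun F : R => Flag.exists_mem F
  choose η hη hηr using fun F : R => hQ.exists_mem_rank (f (φ F)) (hR.rank_mem F)
  refine ⟨η, hηr, fun c F hF => ?_⟩
  have := hR.path_of_mem (hφ F) hF
  clear hF
  induction this with
  | refl => exact hη F
  | tail _ h ih =>
    obtain ⟨j, hj, hadj⟩ := h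
    exact ((hf j _ _ hadj).2 (η F) (by rw [hηr]; exact hj.symm)).1 ih

end Monodromy

/-- **An epimorphism of monodromy groups compatible with flag stabilizers induces
a unique covering.**  Here `gR`, `gQ` are the monodromy generators of the
`n`-polytopes `R` and `Q` (sending each flag to its `j`-adjacent flag),
`Mon(R) = ⟨gR 0, ..., gR (n-1)⟩`, and `ebar : Mon(R) → Mon(Q)` is an epimorphism of
sggi's, i.e. it maps each generator `gR j` to `gQ j`.  If the stabilizer of the
flag `Λ'` of `R` is mapped into the stabilizer of the flag `Λ` of `Q`, then there
is a unique covering `η : R → Q` mapping `Λ'` to `Λ`. -/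
theorem covering_of_monodromy_epimorphism {n : ℕ} {R Q : Type}
    [PartialOrder R] [PartialOrder Q] (rkR : R → ℤ) (rkQ : Q → ℤ)
    (hR : IsAbstractPolytope (n : ℤ) rkR) (hQ : IsAbstractPolytope (n : ℤ) rkQ)
    (gR : Fin n → Equiv.Perm (Flag R))
    (hgR : ∀ (j : Fin n) (Φ : Flag R), IsPolytopeAdj rkR (j : ℤ) Φ (gR j Φ))
    (gQ : Fin n → Equiv.Perm (Flag Q))
    (hgQ : ∀ (j : Fin n) (Φ : Flag Q), IsPolytopeAdj rkQ (j : ℤ) Φ (gQ j Φ))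
    (ebar : ↥(Subgroup.closure (Set.range gR)) →* Equiv.Perm (Flag Q))
    (hebargen : ∀ j : Fin n,
      ebar ⟨gR j, Subgroup.subset_closure (Set.mem_range_self j)⟩ = gQ j)
    (hebarrange : ebar.range = Subgroup.closure (Set.range gQ))
    (Λ' : Flag R) (Λ : Flag Q)
    (hstab : ∀ w : ↥(Subgroup.closure (Set.range gR)),
      (w : Equiv.Perm (Flag R)) Λ' = Λ' → (ebar w) Λ = Λ) :
    ∃! η : R → Q, IsPolytopeCovering rkR rkQ η ∧ η '' (↑Λ' : Set R) = (↑Λ : Set Q) := by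
  obtain ⟨f, hfΛ, hf⟩ := exists_flag_map hR hgR hgQ ebar hebargen Λ' Λ hstab
  obtain ⟨η, hηr, hη⟩ := exists_face_map hR hQ hf
  have himage : ∀ c : Flag R, η '' (c : Set R) = f c := fun c => by
    refine Set.Subset.antisymm (Set.image_subset_iff.2 fun F hF => hη c F hF) fun z hz => ?_
    obtain ⟨F, hF, hFr⟩ := hR.exists_mem_rank c (hQ.rank_mem z)
    exact ⟨F, hF, hQ.eq_of_mem (hη c F hF) hz ((hηr F).trans hFr)⟩
  refine ⟨η, ⟨⟨fun F G hFG => ?_, hηr, fun c => ⟨f c, himage c⟩, ?_⟩, ?_⟩, ?_⟩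
  · obtain ⟨c, hF, hG⟩ := Flag.exists_mem_mem hFG
    refine hQ.le_of_mem (hη c F hF) (hη c G hG) ?_
    rw [hηr, hηr]
    exact hFG.eq_or_lt.elim (fun h => h ▸ le_rfl) fun h => (hR.strictMono h).le
  · intro j c d c' d' hc hd h
    rw [← Flag.ext ((himage c).symm.trans hc), ← Flag.ext ((himage d).symm.trans hd)]
    exact hf j c d h
  · rw [himage, hfΛ]
  · rintro θ ⟨⟨-, hθr, hθflag, hθadj⟩, hθΛ⟩
    have hθ : ∀ c : Flag R, θ '' (c : Set R) = f c := fun c => by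
      have := hR.path Λ' c
      induction this with
      | refl => rw [hθΛ, hfΛ]
      | @tail c d _ h ih =>
        obtain ⟨j, hj⟩ := h
        obtain ⟨d', hd'⟩ := hθflag d
        rw [hd', hQ.adj_unique (hθadj j c d _ d' ih hd' hj) (hf j c d hj)]
    funext F
    obtain ⟨c, hc⟩ := Flag.exists_mem F
    have hθF : θ F ∈ f c := (hθ c).le (Set.mem_image_of_mem θ hc)
    exact hQ.eq_of_mem hθF (hη c F hc) ((hθr F).trans (hηr F).symm)
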